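/- arXiv:2001.05785 — 2 statements merged into one kernel-verified Lean document; each statement's English description precedes it below -/
import Mathlib

section
/- Let S be a Polish metric space and let P be an asymptotically stable Markov-Feller operator on S with invariant probability measure μ*. If the interior of the support of μ* is non-empty, then P has the e-property in C_b(S) at every point of S. -/
open MeasureTheory ProbabilityTheory Filter Topology

/-- The `n`-step evolution of a measure under the Markov operator generated by the
transition kernel `κ`: `P⁰μ = μ`, `Pⁿ⁺¹μ = (Pⁿμ).bind κ`. -/
noncomputable def kIter {S : Type*} [MeasurableSpace S] (κ : ProbabilityTheory.Kernel S S) :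
    ℕ → Measure S → Measure S
  | 0, μ => μ
  | n + 1, μ => (kIter κ n μ).bind (fun x => κ x)

/-- The `n`-th iterate of the dual operator: `Uⁿf(x) = ∫ f d(Pⁿδₓ)`. -/
noncomputable def kDual {S : Type*} [MeasurableSpace S] (κ : ProbabilityTheory.Kernel S S)
    (n : ℕ) (f : S → ℝ) (x : S) : ℝ :=
  ∫ y, f y ∂(kIter κ n (Measure.dirac x))

/-- A real-valued function is bounded. -/
def IsBddFun {S : Type*} (f : S → ℝ) : Prop := ∃ C : ℝ, ∀ x, |f x| ≤ C

/-- The Feller property: the dual operator maps bounded continuous functions to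
continuous functions. -/
def IsFeller {S : Type*} [MeasurableSpace S] [TopologicalSpace S]
    (κ : ProbabilityTheory.Kernel S S) : Prop :=
  ∀ f : S → ℝ, Continuous f → IsBddFun f → Continuous (fun x => ∫ y, f y ∂(κ x))

/-- Asymptotic stability: `μst` is an invariant probability measure and `Pⁿμ → μst`
weakly for every Borel probability measure `μ`. -/
def IsAsympStable {S : Type*} [MeasurableSpace S] [TopologicalSpace S]
    (κ : ProbabilityTheory.Kernel S S) (μst : Measure S) : Prop :=
  IsProbabilityMeasure μst ∧ kIter κ 1 μst = μst ∧
    ∀ μ : Measure S, IsProbabilityMeasure μ → ∀ f : S → ℝ, Continuous f → IsBddFun f →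
      Tendsto (fun n => ∫ x, f x ∂(kIter κ n μ)) atTop (𝓝 (∫ x, f x ∂μst))

/-- The e-property in `C_b(S)` at a point `z`: for every bounded continuous `f`,
`sup_{n} |Uⁿf(x) − Uⁿf(z)| → 0` as `x → z`. -/
def EPropCbAt {S : Type*} [MeasurableSpace S] [TopologicalSpace S]
    (κ : ProbabilityTheory.Kernel S S) (z : S) : Prop :=
  ∀ f : S → ℝ, Continuous f → IsBddFun f →
    Tendsto (fun x => ⨆ n : ℕ, |kDual κ n f x - kDual κ n f z|) (𝓝 z) (𝓝 0)

/-! Let `c = ∫ f ∂μ`. By Baire's theorem, `|Uⁿ f - c| ≤ ε` for all large `n` on some nonempty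
open subset `O` of the support. Take `ψ ≥ 0` continuous with `ψ = 1` off `O` and `∫ ψ ∂μ < 1`. Call
`h ≥ 0` a majorant if eventually `|Uⁿ f - c| ≤ ε + h`. Large constants are majorants, and majorants
are stable under `U` and under multiplication by `ψ`. As `∫ ψ Uᵐh ∂μ → (∫ ψ ∂μ) (∫ h ∂μ)`, the
infimum of `∫ h ∂μ` over all majorants is at most `∫ ψ ∂μ < 1` times itself, hence zero. So each
point `w` has a majorant `Uᵐh` that is small at `w`, hence near `w`: `Uⁿ f(x) → c` jointly as
`n → ∞` and `x → w`. -/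

open scoped BoundedContinuousFunction

theorem equicontinuousAt_of_tendsto_prod {X α : Type*} [TopologicalSpace X] [PseudoMetricSpace α]
    {F : ℕ → X → α} {x₀ : X} {c : α} (hF : ∀ n, ContinuousAt (F n) x₀)
    (hc : Tendsto (fun p : ℕ × X => F p.1 p.2) (atTop ×ˢ 𝓝 x₀) (𝓝 c)) :
    EquicontinuousAt F x₀ := by
  rw [Metric.equicontinuousAt_iff_right]
  intro ε hε
  have hnear : ∀ᶠ p : ℕ × X in atTop ×ˢ 𝓝 x₀, dist (F p.1 p.2) c < ε / 2 :=
    Metric.tendsto_nhds.1 hc _ (half_pos hε)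
  obtain ⟨P, hP, Q, hQ, hPQ⟩ := eventually_prod_iff.1 hnear
  obtain ⟨N, hN⟩ := eventually_atTop.1 hP
  have hhead : ∀ᶠ x in 𝓝 x₀, ∀ n ∈ Finset.range N, dist (F n x) (F n x₀) < ε :=
    (Filter.eventually_all_finset _).2 fun n _ => Metric.tendsto_nhds.1 (hF n) ε hε
  filter_upwards [hhead, hQ] with x hx hQx n
  rcases lt_or_ge n N with hn | hn
  · rw [dist_comm]
    exact hx n (Finset.mem_range.2 hn)
  · calc dist (F n x₀) (F n x) ≤ dist (F n x₀) c + dist (F n x) c := dist_triangle_right _ _ _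
      _ < ε / 2 + ε / 2 := add_lt_add (hPQ (hN n hn) hQ.self_of_nhds) (hPQ (hN n hn) hQx)
      _ = ε := add_halves ε

theorem tendsto_iSup_dist_of_equicontinuousAt {ι X α : Type*} [TopologicalSpace X]
    [PseudoMetricSpace α] {F : ι → X → α} {x₀ : X} (hF : EquicontinuousAt F x₀) :
    Tendsto (fun x => ⨆ i, dist (F i x) (F i x₀)) (𝓝 x₀) (𝓝 0) := by
  refine Metric.tendsto_nhds.2 fun ε hε => ?_
  filter_upwards [Metric.equicontinuousAt_iff_right.1 hF _ (half_pos hε)] with x hx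
  have hsup : ⨆ i, dist (F i x) (F i x₀) ≤ ε / 2 :=
    Real.iSup_le (fun i => by rw [dist_comm]; exact (hx i).le) (half_pos hε).le
  rw [Real.dist_0_eq_abs, abs_of_nonneg (Real.iSup_nonneg fun _ => dist_nonneg)]
  exact hsup.trans_lt (half_lt_self hε)

theorem exists_isOpen_subset_eventually_forall_dist_le {X α : Type*} [TopologicalSpace X]
    [BaireSpace X] [PseudoMetricSpace α] {F : ℕ → X → α} {f : X → α} (hF : ∀ n, Continuous (F n))
    (hf : Continuous f) (hlim : ∀ x, Tendsto (fun n => F n x) atTop (𝓝 (f x))) {V : Set X}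
    (hV : IsOpen V) (hVne : V.Nonempty) {ε : ℝ} (hε : 0 < ε) :
    ∃ O ⊆ V, IsOpen O ∧ O.Nonempty ∧ ∀ᶠ n in atTop, ∀ x ∈ O, dist (F n x) (f x) ≤ ε := by
  let E : ℕ → Set X := fun N => ⋂ n ≥ N, {x | dist (F n x) (f x) ≤ ε}
  have hclosed : ∀ N, IsClosed (E N) := fun N =>
    isClosed_biInter fun n _ => isClosed_le ((hF n).dist hf) continuous_const
  have hcover : ⋃ N, E N = Set.univ := by
    refine Set.eq_univ_of_forall fun x => Set.mem_iUnion.2 ?_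
    obtain ⟨N, hN⟩ := eventually_atTop.1 (Metric.tendsto_nhds.1 (hlim x) ε hε)
    exact ⟨N, Set.mem_iInter₂.2 fun n hn => (hN n hn).le⟩
  obtain ⟨x, hxV, hx⟩ :=
    (dense_iUnion_interior_of_closed hclosed hcover).inter_open_nonempty V hV hVne
  obtain ⟨N, hxN⟩ := Set.mem_iUnion.1 hx
  refine ⟨V ∩ interior (E N), Set.inter_subset_left, hV.inter isOpen_interior, ⟨x, hxV, hxN⟩, ?_⟩
  filter_upwards [eventually_ge_atTop N] with n hn y hy
  exact Set.mem_iInter₂.1 (interior_subset hy.2) n hn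

theorem exists_boundedContinuous_eqOn_compl_one_integral_lt_one {X : Type*} [TopologicalSpace X]
    [CompletelyRegularSpace X] [MeasurableSpace X] [OpensMeasurableSpace X] {μ : Measure X}
    [IsProbabilityMeasure μ] {O : Set X} (hO : IsOpen O) {x : X} (hxO : x ∈ O)
    (hx : x ∈ μ.support) :
    ∃ ψ : X →ᵇ ℝ, 0 ≤ ψ ∧ Set.EqOn ψ 1 Oᶜ ∧ ∫ y, ψ y ∂μ < 1 := by
  obtain ⟨u, hu, hux, huO⟩ := completelyRegularSpace_iff_isOpen.1 inferInstance x O hO hxO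
  let ψ : X →ᵇ ℝ := .ofNormedAddCommGroup (fun y => (u y : ℝ)) (by fun_prop) 1 fun y => by
    rw [Real.norm_of_nonneg (u y).2.1]
    exact (u y).2.2
  refine ⟨ψ, fun y => (u y).2.1, fun y hy => by simp [ψ, huO hy], ?_⟩
  have hnhds : Function.support (1 - ψ : X →ᵇ ℝ) ∈ 𝓝 x :=
    (1 - ψ).continuous.isOpen_support.mem_nhds (by simp [ψ, hux])
  have hpos : 0 < ∫ y, (1 - ψ) y ∂μ :=
    (integral_pos_iff_support_of_nonneg (fun y => sub_nonneg.2 (u y).2.2)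
      ((1 - ψ).integrable μ)).2 ((Measure.mem_support_iff_forall x).1 hx _ hnhds)
  simpa [integral_sub (integrable_const 1) (ψ.integrable μ)] using hpos

theorem support_eq_setOf_forall_measure_ball_pos {X : Type*} [PseudoMetricSpace X]
    [MeasurableSpace X] (μ : Measure X) :
    μ.support = {x | ∀ ε > 0, 0 < μ (Metric.ball x ε)} :=
  Set.ext fun _ => Metric.nhds_basis_ball.mem_measureSupport

section MarkovOperator

variable {S : Type*} [TopologicalSpace S] {U : Module.End ℝ (S →ᵇ ℝ)}

/-- A Markov operator on `C_b(S)`, seen from the dual side: a positive linear operator fixing the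
constants. It need not be given by a kernel. -/
structure IsMarkovOperator (U : Module.End ℝ (S →ᵇ ℝ)) : Prop where
  monotone : Monotone U
  map_one : U 1 = 1

namespace IsMarkovOperator

theorem pow (hU : IsMarkovOperator U) (n : ℕ) : IsMarkovOperator (U ^ n) where
  monotone := by
    rw [Module.End.coe_pow]
    exact hU.monotone.iterate n
  map_one := by
    rw [Module.End.coe_pow]
    exact Function.iterate_fixed hU.map_one n

theorem map_smul_one (hU : IsMarkovOperator U) (a : ℝ) : U (a • 1) = a • 1 := by
  rw [map_smul, hU.map_one]

theorem abs_apply_le (hU : IsMarkovOperator U) {f h : S →ᵇ ℝ} (hfh : |f| ≤ h) :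
    |U f| ≤ U h :=
  abs_le'.2 ⟨hU.monotone ((le_abs_self f).trans hfh),
    (map_neg U f).symm.trans_le (hU.monotone ((neg_le_abs f).trans hfh))⟩

theorem norm_apply_le (hU : IsMarkovOperator U) (f : S →ᵇ ℝ) : ‖U f‖ ≤ ‖f‖ := by
  have hf : |f| ≤ ‖f‖ • 1 := fun x => by simpa using f.norm_coe_le_norm x
  refine (BoundedContinuousFunction.norm_le (norm_nonneg f)).2 fun x => ?_
  simpa [hU.map_smul_one] using hU.abs_apply_le hf x

end IsMarkovOperator

/-- The nonnegative functions that bound the iterates `Uⁿ g` up to an error `ε` for large `n`. -/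
def eventualMajorants (U : Module.End ℝ (S →ᵇ ℝ)) (g : S →ᵇ ℝ) (ε : ℝ) : Set (S →ᵇ ℝ) :=
  {h | 0 ≤ h ∧ ∀ᶠ n in atTop, |(U ^ n) g| ≤ ε • 1 + h}

variable {g h ψ : S →ᵇ ℝ} {ε : ℝ}

theorem norm_smul_one_mem_eventualMajorants (hU : IsMarkovOperator U) (g : S →ᵇ ℝ) (hε : 0 ≤ ε) :
    ‖g‖ • 1 ∈ eventualMajorants U g ε := by
  refine ⟨fun x => by simp, .of_forall fun n x => ?_⟩
  calc |(U ^ n) g x| ≤ ‖(U ^ n) g‖ := ((U ^ n) g).norm_coe_le_norm x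
    _ ≤ ‖g‖ := (hU.pow n).norm_apply_le g
    _ ≤ (ε • 1 + ‖g‖ • 1 : S →ᵇ ℝ) x := by simpa using hε

theorem pow_apply_mem_eventualMajorants (hU : IsMarkovOperator U)
    (hh : h ∈ eventualMajorants U g ε) (m : ℕ) : (U ^ m) h ∈ eventualMajorants U g ε := by
  refine ⟨by simpa using (hU.pow m).monotone hh.1, ?_⟩
  filter_upwards [(tendsto_sub_atTop_nat m).eventually hh.2, eventually_ge_atTop m] with n hn hmn
  simpa only [← Module.End.mul_apply, ← pow_add, Nat.add_sub_of_le hmn, map_add,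
    (hU.pow m).map_smul_one] using (hU.pow m).abs_apply_le hn

theorem mul_mem_eventualMajorants (hψ₀ : 0 ≤ ψ)
    (hψ : ∀ᶠ n in atTop, ∀ x, ψ x ≠ 1 → |(U ^ n) g x| ≤ ε)
    (hh : h ∈ eventualMajorants U g ε) : ψ * h ∈ eventualMajorants U g ε := by
  have hψh : ∀ x, 0 ≤ ψ x * h x := fun x => mul_nonneg (hψ₀ x) (hh.1 x)
  refine ⟨hψh, ?_⟩
  filter_upwards [hψ, hh.2] with n hsmall hmaj x
  by_cases hx : ψ x = 1
  · simpa [hx] using hmaj x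
  · simpa using (hsmall x hx).trans (le_add_of_nonneg_right (hψh x))

variable [MeasurableSpace S] [OpensMeasurableSpace S] {μ : Measure S} [IsProbabilityMeasure μ]

theorem tendsto_integral_mul_pow_apply (hU : IsMarkovOperator U)
    (hlim : ∀ (f : S →ᵇ ℝ) (x : S), Tendsto (fun n => (U ^ n) f x) atTop (𝓝 (∫ y, f y ∂μ)))
    (ψ h : S →ᵇ ℝ) :
    Tendsto (fun m => ∫ x, (ψ * (U ^ m) h) x ∂μ) atTop (𝓝 ((∫ x, ψ x ∂μ) * ∫ x, h x ∂μ)) := by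
  rw [← integral_mul_const]
  refine tendsto_integral_of_dominated_convergence (fun _ => ‖ψ‖ * ‖h‖)
    (fun m => ((ψ * (U ^ m) h).integrable μ).aestronglyMeasurable) (integrable_const _)
    (fun m => ae_of_all _ fun x => ?_) (ae_of_all _ fun x => (hlim h x).const_mul (ψ x))
  calc ‖(ψ * (U ^ m) h) x‖ ≤ ‖ψ * (U ^ m) h‖ := (ψ * (U ^ m) h).norm_coe_le_norm x
    _ ≤ ‖ψ‖ * ‖(U ^ m) h‖ := norm_mul_le _ _
    _ ≤ ‖ψ‖ * ‖h‖ := mul_le_mul_of_nonneg_left ((hU.pow m).norm_apply_le h) (norm_nonneg ψ)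

theorem exists_mem_eventualMajorants_integral_lt (hU : IsMarkovOperator U)
    (hlim : ∀ (f : S →ᵇ ℝ) (x : S), Tendsto (fun n => (U ^ n) f x) atTop (𝓝 (∫ y, f y ∂μ)))
    (hε : 0 ≤ ε) (hψ₀ : 0 ≤ ψ) (hψ₁ : ∫ x, ψ x ∂μ < 1)
    (hψ : ∀ᶠ n in atTop, ∀ x, ψ x ≠ 1 → |(U ^ n) g x| ≤ ε) {δ : ℝ} (hδ : 0 < δ) :
    ∃ h ∈ eventualMajorants U g ε, ∫ x, h x ∂μ < δ := by
  let I : eventualMajorants U g ε → ℝ := fun h => ∫ x, (h : S →ᵇ ℝ) x ∂μ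
  have : Nonempty (eventualMajorants U g ε) := ⟨_, norm_smul_one_mem_eventualMajorants hU g hε⟩
  have hbdd : BddBelow (Set.range I) :=
    ⟨0, Set.forall_mem_range.2 fun h => integral_nonneg h.2.1⟩
  have hstep : ∀ h, ⨅ h', I h' ≤ (∫ x, ψ x ∂μ) * I h := fun h =>
    ge_of_tendsto' (tendsto_integral_mul_pow_apply hU hlim ψ h) fun m => ciInf_le hbdd
      ⟨_, mul_mem_eventualMajorants hψ₀ hψ (pow_apply_mem_eventualMajorants hU h.2 m)⟩
  have hcontract : ⨅ h, I h ≤ (∫ x, ψ x ∂μ) * ⨅ h, I h := by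
    have hψint : 0 ≤ ∫ x, ψ x ∂μ := integral_nonneg hψ₀
    rw [Real.mul_iInf_of_nonneg hψint]
    exact le_ciInf hstep
  have hinf : ⨅ h, I h < δ := by nlinarith
  obtain ⟨⟨h, hh⟩, hlt⟩ := exists_lt_of_ciInf_lt hinf
  exact ⟨h, hh, hlt⟩

theorem exists_mem_eventualMajorants_apply_lt (hU : IsMarkovOperator U)
    (hlim : ∀ (f : S →ᵇ ℝ) (x : S), Tendsto (fun n => (U ^ n) f x) atTop (𝓝 (∫ y, f y ∂μ)))
    (hε : 0 ≤ ε) (hψ₀ : 0 ≤ ψ) (hψ₁ : ∫ x, ψ x ∂μ < 1)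
    (hψ : ∀ᶠ n in atTop, ∀ x, ψ x ≠ 1 → |(U ^ n) g x| ≤ ε) {δ : ℝ} (hδ : 0 < δ) (w : S) :
    ∃ h ∈ eventualMajorants U g ε, h w < δ := by
  obtain ⟨h, hh, hlt⟩ := exists_mem_eventualMajorants_integral_lt hU hlim hε hψ₀ hψ₁ hψ hδ
  obtain ⟨m, hm⟩ := ((hlim h w).eventually_lt_const hlt).exists
  exact ⟨(U ^ m) h, pow_apply_mem_eventualMajorants hU hh m, hm⟩

variable [BaireSpace S] [CompletelyRegularSpace S]

theorem tendsto_pow_apply_prod_nhds_zero (hU : IsMarkovOperator U)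
    (hlim : ∀ (f : S →ᵇ ℝ) (x : S), Tendsto (fun n => (U ^ n) f x) atTop (𝓝 (∫ y, f y ∂μ)))
    (hsupp : (interior μ.support).Nonempty) (hg : ∫ x, g x ∂μ = 0) (w : S) :
    Tendsto (fun p : ℕ × S => (U ^ p.1) g p.2) (atTop ×ˢ 𝓝 w) (𝓝 0) := by
  refine Metric.tendsto_nhds.2 fun ε hε => ?_
  obtain ⟨O, hOsupp, hO, ⟨x₀, hx₀⟩, hsmall⟩ := exists_isOpen_subset_eventually_forall_dist_le
    (fun n => ((U ^ n) g).continuous) continuous_const (hg ▸ hlim g) isOpen_interior hsupp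
    (half_pos hε)
  obtain ⟨ψ, hψ₀, hψO, hψ₁⟩ := exists_boundedContinuous_eqOn_compl_one_integral_lt_one hO hx₀
    (interior_subset (hOsupp hx₀))
  have hψ : ∀ᶠ n in atTop, ∀ x, ψ x ≠ 1 → |(U ^ n) g x| ≤ ε / 2 := hsmall.mono fun n hn x hx =>
    Real.dist_0_eq_abs ((U ^ n) g x) ▸ hn x (Set.not_notMem.1 fun hxO => hx (hψO hxO))
  obtain ⟨h, hh, hhw⟩ := exists_mem_eventualMajorants_apply_lt hU hlim (half_pos hε).le hψ₀ hψ₁ hψ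
    (half_pos hε) w
  filter_upwards [hh.2.prod_mk (h.continuous.continuousAt.eventually_lt_const hhw)]
    with ⟨n, x⟩ ⟨hn, hx⟩
  calc dist ((U ^ n) g x) 0 = |(U ^ n) g x| := Real.dist_0_eq_abs _
    _ ≤ ε / 2 + h x := by simpa using hn x
    _ < ε := by linarith

theorem tendsto_pow_apply_prod_nhds (hU : IsMarkovOperator U)
    (hlim : ∀ (f : S →ᵇ ℝ) (x : S), Tendsto (fun n => (U ^ n) f x) atTop (𝓝 (∫ y, f y ∂μ)))
    (hsupp : (interior μ.support).Nonempty) (f : S →ᵇ ℝ) (w : S) :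
    Tendsto (fun p : ℕ × S => (U ^ p.1) f p.2) (atTop ×ˢ 𝓝 w) (𝓝 (∫ x, f x ∂μ)) := by
  set c : ℝ := ∫ x, f x ∂μ with hc
  have hcentred : ∫ x, (f - c • 1) x ∂μ = 0 := by
    simp [integral_sub (f.integrable μ) (integrable_const c), ← hc]
  simpa [(hU.pow _).map_smul_one] using
    (tendsto_pow_apply_prod_nhds_zero hU hlim hsupp hcentred w).add_const c

end MarkovOperator

theorem isBddFun_coe {S : Type*} [TopologicalSpace S] (f : S →ᵇ ℝ) : IsBddFun f :=
  ⟨‖f‖, f.norm_coe_le_norm⟩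

section Kernel

variable {S : Type*} [MeasurableSpace S] {κ : ProbabilityTheory.Kernel S S} [IsMarkovKernel κ]

instance isProbabilityMeasure_kIter (n : ℕ) (μ : Measure S) [IsProbabilityMeasure μ] :
    IsProbabilityMeasure (kIter κ n μ) := by
  induction n with
  | zero => assumption
  | succ n ih => exact inferInstanceAs (IsProbabilityMeasure ((kIter κ n μ).bind κ))

variable [TopologicalSpace S] [OpensMeasurableSpace S]

namespace IsFeller

/-- The dual operator `U` of a Feller kernel, as a linear operator on `C_b(S)`. -/
noncomputable def dual (hκ : IsFeller κ) : Module.End ℝ (S →ᵇ ℝ) where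
  toFun f := .ofNormedAddCommGroup (fun x => ∫ y, f y ∂(κ x)) (hκ f f.continuous (isBddFun_coe f))
    ‖f‖ fun x => f.norm_integral_le_norm (κ x)
  map_add' f g := by
    ext x
    exact integral_add (f.integrable (κ x)) (g.integrable (κ x))
  map_smul' c f := by
    ext x
    exact integral_const_mul c f

theorem dual_apply (hκ : IsFeller κ) (f : S →ᵇ ℝ) (x : S) : hκ.dual f x = ∫ y, f y ∂(κ x) :=
  rfl

theorem isMarkovOperator_dual (hκ : IsFeller κ) : IsMarkovOperator hκ.dual where
  monotone f g hfg x := integral_mono (f.integrable (κ x)) (g.integrable (κ x)) hfg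
  map_one := by
    ext x
    simp [dual_apply]

theorem integral_kIter (hκ : IsFeller κ) (n : ℕ) (μ : Measure S) [IsProbabilityMeasure μ]
    (f : S →ᵇ ℝ) : ∫ x, f x ∂(kIter κ n μ) = ∫ x, (hκ.dual ^ n) f x ∂μ := by
  induction n generalizing f with
  | zero => rfl
  | succ n ih =>
    calc ∫ x, f x ∂(kIter κ (n + 1) μ) = ∫ x, hκ.dual f x ∂(kIter κ n μ) :=
          Kernel.integral_comp (η := κ) (κ := Kernel.const Unit (kIter κ n μ)) (a := ())
            (f.integrable _)
      _ = ∫ x, (hκ.dual ^ (n + 1)) f x ∂μ := ih (hκ.dual f)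

theorem kDual_eq (hκ : IsFeller κ) (n : ℕ) (f : S →ᵇ ℝ) :
    kDual κ n f = (hκ.dual ^ n) f := by
  ext x
  rw [kDual, hκ.integral_kIter,
    integral_dirac' _ _ ((hκ.dual ^ n) f).continuous.stronglyMeasurable]

end IsFeller

end Kernel

theorem eProp_everywhere_of_interior_support_nonempty_general
    {S : Type*} [TopologicalSpace S] [BaireSpace S] [CompletelyRegularSpace S]
    [MeasurableSpace S] [OpensMeasurableSpace S]
    (κ : ProbabilityTheory.Kernel S S) [IsMarkovKernel κ] (hFeller : IsFeller κ)
    (μst : Measure S) [IsProbabilityMeasure μst]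
    (hlim : ∀ x : S, ∀ f : S → ℝ, Continuous f → IsBddFun f →
      Tendsto (fun n => kDual κ n f x) atTop (𝓝 (∫ y, f y ∂μst)))
    (hsupp : (interior μst.support).Nonempty) :
    ∀ w : S, EPropCbAt κ w := by
  rintro w f hf ⟨C, hC⟩
  let F : S →ᵇ ℝ := .ofNormedAddCommGroup f hf C hC
  have hpow : ∀ n, kDual κ n f = (hFeller.dual ^ n) F := fun n => hFeller.kDual_eq n F
  have hjoint : Tendsto (fun p : ℕ × S => kDual κ p.1 f p.2) (atTop ×ˢ 𝓝 w)
      (𝓝 (∫ y, f y ∂μst)) := by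
    simp only [hpow]
    refine tendsto_pow_apply_prod_nhds hFeller.isMarkovOperator_dual (fun G x => ?_) hsupp F w
    simpa only [hFeller.kDual_eq] using hlim x G G.continuous (isBddFun_coe G)
  have hcont : ∀ n, ContinuousAt (kDual κ n f) w := fun n =>
    hpow n ▸ ((hFeller.dual ^ n) F).continuous.continuousAt
  exact tendsto_iSup_dist_of_equicontinuousAt (equicontinuousAt_of_tendsto_prod hcont hjoint)

/-- If the support of the invariant measure of an asymptotically stable Markov–Feller
operator on a Polish metric space has non-empty interior, then the operator has the
e-property in `C_b(S)` at every point of `S`. -/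
theorem eProp_everywhere_of_interior_support_nonempty
    {S : Type*} [MetricSpace S] [CompleteSpace S] [SecondCountableTopology S]
    [MeasurableSpace S] [BorelSpace S]
    (κ : ProbabilityTheory.Kernel S S) [IsMarkovKernel κ]
    (hFeller : IsFeller κ) (μst : Measure S) (hstab : IsAsympStable κ μst)
    (hsupp : (interior {x : S | ∀ ε > 0, 0 < μst (Metric.ball x ε)}).Nonempty) :
    ∀ w : S, EPropCbAt κ w := by
  obtain ⟨_, -, hconv⟩ := hstab
  exact eProp_everywhere_of_interior_support_nonempty_general κ hFeller μst
    (fun x => hconv (Measure.dirac x) inferInstance)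
    (support_eq_setOf_forall_measure_ball_pos μst ▸ hsupp)
end

section
/- Let S be a Polish metric space and let P be an asymptotically stable Markov-Feller operator on S with invariant probability measure μ*, and for k ≥ 1 let O_k = { x ∈ S : there exist an open neighbourhood O of x and N ∈ ℕ such that for all n ≥ N and all y ∈ O, d_FM(Pⁿδ_y, μ*) ≤ 1/k }. Then for every z ∈ ⋂_{k≥1} O_k one has lim_{x→z} sup_{n∈ℕ} d_FM(Pⁿδ_x, Pⁿδ_z) = 0; in particular P has the e-property in L_FM(S) at every point of ⋂_{k≥1} O_k. -/
/-!
A point `z` lies in every `O_k` exactly when `Pⁿδ_y → μ*` in the Fortet–Mourier distance as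
`n → ∞` and `y → z` jointly. The triangle inequality through `μ*` then makes `d_FM(Pⁿδₓ, Pⁿδ_z)`
small for all large `n` and all `x` near `z`. Each of the finitely many remaining `n` is handled by
the Feller property: `x ↦ Pⁿδₓ` is weakly continuous, and on a separable space weak convergence
of probability measures implies `d_FM`-convergence, because it implies Lévy–Prokhorov convergence
and the layer cake formula bounds `d_FM` by a multiple of the Lévy–Prokhorov distance.
-/

open MeasureTheory ProbabilityTheory Filter Topology

/-- The Fortet–Mourier distance of two finite Borel measures: the supremum of
`|∫ f dμ − ∫ f dν|` over all 1-Lipschitz functions `f : S → [0,1]`. -/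
noncomputable def dFM {S : Type*} [MeasurableSpace S] [PseudoMetricSpace S]
    (μ ν : Measure S) : ℝ :=
  ⨆ f : {f : S → ℝ // LipschitzWith 1 f ∧ ∀ x, f x ∈ Set.Icc (0 : ℝ) 1},
    |∫ x, f.1 x ∂μ - ∫ x, f.1 x ∂ν|

/-- The open set `O_k` of points having a neighbourhood on which, from some time on, all
`n`-step distributions are `1/k`-close to the invariant measure in Fortet–Mourier distance. -/
def Ok {S : Type*} [MeasurableSpace S] [MetricSpace S]
    (κ : ProbabilityTheory.Kernel S S) (μst : Measure S) (k : ℕ) : Set S :=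
  {x : S | ∃ O : Set S, IsOpen O ∧ x ∈ O ∧ ∃ N : ℕ, ∀ n ≥ N, ∀ y ∈ O,
    dFM (kIter κ n (Measure.dirac y)) μst ≤ 1 / (k : ℝ)}

lemma tendsto_iSup_zero_of_tendsto_cofinite_prod {ι α : Type*} {l : Filter α} {F : ι → α → ℝ}
    (hF : ∀ i x, 0 ≤ F i x) (hl : ∀ i, Tendsto (F i) l (𝓝 0))
    (hcof : Tendsto (fun p : ι × α => F p.1 p.2) (cofinite ×ˢ l) (𝓝 0)) :
    Tendsto (fun x => ⨆ i, F i x) l (𝓝 0) := by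
  rw [Metric.tendsto_nhds]
  intro ε hε
  obtain ⟨p, hp, q, hq, hpq⟩ :=
    eventually_prod_iff.1 (hcof.eventually_lt_const (half_pos hε))
  have hexc : ∀ᶠ x in l, ∀ i ∈ {i | ¬ p i}, F i x < ε / 2 :=
    (eventually_all_finite hp).2 fun i _ => (hl i).eventually_lt_const (half_pos hε)
  filter_upwards [hq, hexc] with x hqx hx
  have hle : ⨆ i, F i x ≤ ε / 2 := Real.iSup_le (fun i => by
    by_cases hi : p i
    · exact (hpq hi hqx).le
    · exact (hx i hi).le) (half_pos hε).le
  rw [Real.dist_0_eq_abs, abs_of_nonneg (Real.iSup_nonneg (hF · x))]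
  linarith

section IteratedKernel

variable {S : Type*} [MeasurableSpace S]

instance isMarkovKernel_pow (κ : Kernel S S) [IsMarkovKernel κ] (n : ℕ) :
    IsMarkovKernel (κ ^ n) := by
  induction n with
  | zero => exact inferInstanceAs (IsMarkovKernel Kernel.id)
  | succ n ih =>
    rw [pow_succ']
    exact inferInstanceAs (IsMarkovKernel (κ ∘ₖ (κ ^ n)))

lemma kIter_dirac (κ : Kernel S S) (n : ℕ) (x : S) :
    kIter κ n (Measure.dirac x) = (κ ^ n) x := by
  induction n with
  | zero => exact (Kernel.id_apply x).symm
  | succ n ih =>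
    rw [pow_succ', kIter, ih]
    exact (Kernel.comp_apply κ (κ ^ n) x).symm

end IteratedKernel

section Feller

variable {S : Type*} [MeasurableSpace S] [TopologicalSpace S] [OpensMeasurableSpace S]
  {κ η : Kernel S S}

lemma IsFeller.id : IsFeller (Kernel.id : Kernel S S) := by
  intro f hf _
  simpa only [Kernel.id_apply, integral_dirac' f _ hf.measurable.stronglyMeasurable] using hf

lemma IsFeller.comp [IsFiniteKernel η] [IsFiniteKernel κ] (hη : IsFeller η) (hκ : IsFeller κ) :
    IsFeller (η ∘ₖ κ) := by
  rintro f hf ⟨C, hC⟩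
  have hint (x : S) : Integrable f ((η ∘ₖ κ) x) :=
    .of_bound hf.measurable.aestronglyMeasurable C (.of_forall hC)
  have hbdd : IsBddFun fun y => ∫ z, f z ∂η y := by
    refine ⟨|C| * η.bound.toReal, fun y => ?_⟩
    calc |∫ z, f z ∂η y| ≤ |C| * (η y).real Set.univ :=
          norm_integral_le_of_norm_le_const (f := f)
            (.of_forall fun z => (hC z).trans (le_abs_self C))
      _ ≤ |C| * η.bound.toReal := by
          gcongr
          exact ENNReal.toReal_mono η.bound_ne_top (η.measure_le_bound y Set.univ)
  simpa only [Kernel.integral_comp (hint _)] using hκ _ (hη f hf ⟨C, hC⟩) hbdd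

lemma IsFeller.pow [IsMarkovKernel κ] (hκ : IsFeller κ) (n : ℕ) : IsFeller (κ ^ n) := by
  induction n with
  | zero => exact .id
  | succ n ih =>
    rw [pow_succ']
    exact hκ.comp ih

lemma IsFeller.tendsto_probabilityMeasure [IsMarkovKernel κ] (hκ : IsFeller κ) (z : S) :
    Tendsto (β := ProbabilityMeasure S) (fun x => ⟨κ x, inferInstance⟩) (𝓝 z)
      (𝓝 ⟨κ z, inferInstance⟩) :=
  ProbabilityMeasure.tendsto_iff_forall_integral_tendsto.2 fun f =>
    (hκ f f.continuous ⟨‖f‖, f.norm_coe_le_norm⟩).tendsto z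

end Feller

section FortetMourier

variable {S : Type*} [MeasurableSpace S]

lemma integral_mem_Icc_measureReal_univ {f : S → ℝ} (hf : ∀ x, f x ∈ Set.Icc (0 : ℝ) 1)
    (μ : Measure S) [IsFiniteMeasure μ] : ∫ x, f x ∂μ ∈ Set.Icc 0 (μ.real Set.univ) := by
  refine ⟨integral_nonneg fun x => (hf x).1, ?_⟩
  have hnorm := norm_integral_le_of_norm_le_const (μ := μ) (f := f) (C := 1)
    (.of_forall fun x => by rw [Real.norm_of_nonneg (hf x).1]; exact (hf x).2)
  rw [one_mul] at hnorm
  exact (le_abs_self _).trans hnorm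

lemma abs_integral_sub_integral_le_max {f : S → ℝ} (hf : ∀ x, f x ∈ Set.Icc (0 : ℝ) 1)
    (μ ν : Measure S) [IsFiniteMeasure μ] [IsFiniteMeasure ν] :
    |∫ x, f x ∂μ - ∫ x, f x ∂ν| ≤ max (μ.real Set.univ) (ν.real Set.univ) := by
  obtain ⟨hμ0, hμ⟩ := integral_mem_Icc_measureReal_univ hf μ
  obtain ⟨hν0, hν⟩ := integral_mem_Icc_measureReal_univ hf ν
  exact abs_sub_le_of_nonneg_of_le hμ0 (le_max_of_le_left hμ) hν0 (le_max_of_le_right hν)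

variable [PseudoMetricSpace S]

lemma dFM_nonneg (μ ν : Measure S) : 0 ≤ dFM μ ν :=
  Real.iSup_nonneg fun _ => abs_nonneg _

lemma dFM_le {μ ν : Measure S} {c : ℝ} (hc : 0 ≤ c)
    (h : ∀ f : S → ℝ, LipschitzWith 1 f → (∀ x, f x ∈ Set.Icc (0 : ℝ) 1) →
      |∫ x, f x ∂μ - ∫ x, f x ∂ν| ≤ c) : dFM μ ν ≤ c :=
  Real.iSup_le (fun f => h f.1 f.2.1 f.2.2) hc

lemma dFM_le_max (μ ν : Measure S) [IsFiniteMeasure μ] [IsFiniteMeasure ν] :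
    dFM μ ν ≤ max (μ.real Set.univ) (ν.real Set.univ) :=
  dFM_le (le_max_of_le_left measureReal_nonneg) fun _ _ hf =>
    abs_integral_sub_integral_le_max hf μ ν

lemma abs_integral_sub_integral_le_dFM {f : S → ℝ} (hlip : LipschitzWith 1 f)
    (hf : ∀ x, f x ∈ Set.Icc (0 : ℝ) 1) (μ ν : Measure S) [IsFiniteMeasure μ]
    [IsFiniteMeasure ν] : |∫ x, f x ∂μ - ∫ x, f x ∂ν| ≤ dFM μ ν :=
  le_ciSup (f := fun f : {f : S → ℝ // LipschitzWith 1 f ∧ ∀ x, f x ∈ Set.Icc (0 : ℝ) 1} =>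
      |∫ x, f.1 x ∂μ - ∫ x, f.1 x ∂ν|)
    ⟨_, Set.forall_mem_range.2 fun g => abs_integral_sub_integral_le_max g.2.2 μ ν⟩ ⟨f, hlip, hf⟩

lemma dFM_comm (μ ν : Measure S) : dFM μ ν = dFM ν μ := by
  simp only [dFM, abs_sub_comm]

lemma dFM_triangle (μ ν ρ : Measure S) [IsFiniteMeasure μ] [IsFiniteMeasure ν]
    [IsFiniteMeasure ρ] : dFM μ ρ ≤ dFM μ ν + dFM ν ρ :=
  dFM_le (add_nonneg (dFM_nonneg _ _) (dFM_nonneg _ _)) fun _ hlip hf =>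
    (abs_sub_le _ _ _).trans (add_le_add (abs_integral_sub_integral_le_dFM hlip hf μ ν)
      (abs_integral_sub_integral_le_dFM hlip hf ν ρ))

end FortetMourier

lemma thickening_setOf_le_subset_of_lipschitzWith {S : Type*} [PseudoMetricSpace S]
    {K : NNReal} {f : S → ℝ} (hf : LipschitzWith K f) (ε t : ℝ) :
    Metric.thickening ε {x | t ≤ f x} ⊆ {x | t ≤ f x + K * ε} := by
  intro x hx
  obtain ⟨y, hy, hxy⟩ := Metric.mem_thickening_iff.1 hx
  have hfy : f y - f x ≤ K * dist y x := (le_abs_self _).trans (hf.dist_le_mul y x)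
  have hK : K * dist y x ≤ K * ε := by rw [dist_comm]; gcongr
  simp only [Set.mem_ofPred_eq] at hy ⊢
  linarith

section LevyProkhorov

variable {S : Type*} [MeasurableSpace S]

lemma integrableOn_Ioc_measureReal_le (ν : Measure S) [IsFiniteMeasure ν] (g : S → ℝ) (a b : ℝ) :
    IntegrableOn (fun t => ν.real {x | t ≤ g x}) (Set.Ioc a b) :=
  have hanti : Antitone fun t => ν.real {x | t ≤ g x} :=
    fun _ _ hst => measureReal_mono fun _ h => hst.trans h
  (hanti.locallyIntegrable.integrableOn_isCompact isCompact_Icc).mono_set Set.Ioc_subset_Icc_self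

variable [PseudoMetricSpace S] [OpensMeasurableSpace S]

lemma integral_le_integral_add_of_levyProkhorovEDist_lt {μ ν : Measure S} [IsFiniteMeasure μ]
    [IsFiniteMeasure ν] {ε : ℝ} (hε : 0 < ε) (hμν : levyProkhorovEDist μ ν < ENNReal.ofReal ε)
    {K : NNReal} {f : BoundedContinuousFunction S ℝ} (hf : 0 ≤ f) (hlip : LipschitzWith K f) :
    ∫ x, f x ∂μ ≤ ∫ x, f x ∂ν + (K * ν.real Set.univ + ‖f‖) * ε := by
  have hKε : 0 ≤ K * ε := by positivity
  have hadd : Integrable (fun x => f x + K * ε) ν := (f.integrable ν).add (integrable_const _)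
  have hlayer : ∫ t in Set.Ioc 0 ‖f‖, ν.real (Metric.thickening ε {x | t ≤ f x}) ≤
      ∫ x, f x ∂ν + K * ε * ν.real Set.univ := calc
    _ ≤ ∫ t in Set.Ioc 0 ‖f‖, ν.real {x | t ≤ f x + K * ε} :=
        integral_mono_of_nonneg (.of_forall fun _ => measureReal_nonneg)
          (integrableOn_Ioc_measureReal_le ν _ _ _)
          (.of_forall fun t =>
            measureReal_mono (thickening_setOf_le_subset_of_lipschitzWith hlip ε t))
    _ ≤ ∫ t in Set.Ioc 0 (‖f‖ + K * ε), ν.real {x | t ≤ f x + K * ε} :=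
        setIntegral_mono_set (integrableOn_Ioc_measureReal_le ν _ _ _)
          (.of_forall fun _ => measureReal_nonneg)
          (Set.Ioc_subset_Ioc_right (le_add_of_nonneg_right hKε)).eventuallyLE
    _ = ∫ x, (f x + K * ε) ∂ν :=
        (hadd.integral_eq_integral_Ioc_meas_le (.of_forall fun x => add_nonneg (hf x) hKε)
          (.of_forall fun x => add_le_add_left (f.apply_le_norm x) _)).symm
    _ = ∫ x, f x ∂ν + K * ε * ν.real Set.univ := by
        rw [integral_add (f.integrable ν) (integrable_const _), integral_const, smul_eq_mul,
          mul_comm (ν.real Set.univ)]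
  have hbound := BoundedContinuousFunction.integral_le_of_levyProkhorovEDist_lt μ ν hε hμν f
    (.of_forall hf)
  linarith

lemma integral_le_integral_add_mul_levyProkhorovDist (μ ν : Measure S) [IsFiniteMeasure μ]
    [IsFiniteMeasure ν] {K : NNReal} {f : BoundedContinuousFunction S ℝ} (hf : 0 ≤ f)
    (hlip : LipschitzWith K f) :
    ∫ x, f x ∂μ ≤ ∫ x, f x ∂ν + (K * ν.real Set.univ + ‖f‖) * levyProkhorovDist μ ν := by
  have hcont : Continuous fun r : ℝ => ∫ x, f x ∂ν + (K * ν.real Set.univ + ‖f‖) * r := by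
    fun_prop
  refine ge_of_tendsto (hcont.continuousWithinAt (s := Set.Ioi (levyProkhorovDist μ ν))) ?_
  filter_upwards [self_mem_nhdsWithin] with r hr
  have hr0 : 0 < r := ENNReal.toReal_nonneg.trans_lt hr
  exact integral_le_integral_add_of_levyProkhorovEDist_lt hr0
    ((ENNReal.lt_ofReal_iff_toReal_lt (levyProkhorovEDist_ne_top μ ν)).2 hr) hf hlip

lemma dFM_le_mul_levyProkhorovDist (μ ν : Measure S) [IsFiniteMeasure μ] [IsFiniteMeasure ν] :
    dFM μ ν ≤ (max (μ.real Set.univ) (ν.real Set.univ) + 1) * levyProkhorovDist μ ν := by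
  have hLP : 0 ≤ levyProkhorovDist μ ν := ENNReal.toReal_nonneg
  refine dFM_le (by positivity) fun f hlip hf => ?_
  have hnorm (x : S) : ‖f x‖ ≤ 1 := by rw [Real.norm_of_nonneg (hf x).1]; exact (hf x).2
  let g := BoundedContinuousFunction.ofNormedAddCommGroup f hlip.continuous 1 hnorm
  have hg : ‖g‖ ≤ 1 :=
    BoundedContinuousFunction.norm_ofNormedAddCommGroup_le hlip.continuous zero_le_one hnorm
  have hdiff (μ' ν' : Measure S) [IsFiniteMeasure μ'] [IsFiniteMeasure ν'] :
      ∫ x, f x ∂μ' - ∫ x, f x ∂ν' ≤ (ν'.real Set.univ + 1) * levyProkhorovDist μ' ν' := by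
    have hLP' : 0 ≤ levyProkhorovDist μ' ν' := ENNReal.toReal_nonneg
    calc ∫ x, f x ∂μ' - ∫ x, f x ∂ν'
        ≤ ((1 : NNReal) * ν'.real Set.univ + ‖g‖) * levyProkhorovDist μ' ν' :=
          sub_left_le_of_le_add <| integral_le_integral_add_mul_levyProkhorovDist μ' ν' (f := g)
            (fun x => (hf x).1) hlip
      _ ≤ (ν'.real Set.univ + 1) * levyProkhorovDist μ' ν' := by
          rw [NNReal.coe_one, one_mul]
          gcongr
  refine abs_sub_le_iff.2 ⟨(hdiff μ ν).trans ?_, (hdiff ν μ).trans ?_⟩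
  · gcongr
    exact le_max_right _ _
  · rw [levyProkhorovDist_comm]
    gcongr
    exact le_max_left _ _

lemma tendsto_dFM_of_tendsto_probabilityMeasure [TopologicalSpace.SeparableSpace S] {ι : Type*}
    {l : Filter ι} {μs : ι → ProbabilityMeasure S} {μ : ProbabilityMeasure S}
    (h : Tendsto μs l (𝓝 μ)) :
    Tendsto (fun i => dFM (μs i : Measure S) (μ : Measure S)) l (𝓝 0) := by
  have hLP : Tendsto (fun i => levyProkhorovDist (μs i : Measure S) (μ : Measure S)) l (𝓝 0) :=
    tendsto_iff_dist_tendsto_zero.1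
      ((LevyProkhorov.continuous_ofMeasure_probabilityMeasure.tendsto μ).comp h)
  have hbound (i : ι) : dFM (μs i : Measure S) (μ : Measure S) ≤
      2 * levyProkhorovDist (μs i : Measure S) (μ : Measure S) := by
    have hle := dFM_le_mul_levyProkhorovDist (μs i : Measure S) (μ : Measure S)
    rwa [probReal_univ, probReal_univ, max_self, one_add_one_eq_two] at hle
  exact squeeze_zero (fun _ => dFM_nonneg _ _) hbound (by simpa using hLP.const_mul 2)

lemma IsFeller.tendsto_dFM [TopologicalSpace.SeparableSpace S] {κ : Kernel S S} [IsMarkovKernel κ]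
    (hκ : IsFeller κ) (z : S) : Tendsto (fun x => dFM (κ x) (κ z)) (𝓝 z) (𝓝 0) :=
  (tendsto_dFM_of_tendsto_probabilityMeasure (hκ.tendsto_probabilityMeasure z) :)

end LevyProkhorov

section JointConvergence

variable {S : Type*} [MetricSpace S] [MeasurableSpace S] {κ : Kernel S S} {μst : Measure S} {z : S}

lemma tendsto_dFM_pow_of_mem_iInter_Ok (hz : z ∈ ⋂ k ∈ {k : ℕ | 1 ≤ k}, Ok κ μst k) :
    Tendsto (fun p : ℕ × S => dFM ((κ ^ p.1) p.2) μst) (atTop ×ˢ 𝓝 z) (𝓝 0) := by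
  rw [Metric.tendsto_nhds]
  intro ε hε
  obtain ⟨k, hk⟩ := exists_nat_one_div_lt hε
  obtain ⟨O, hO, hzO, N, hN⟩ := Set.mem_iInter₂.1 hz (k + 1) (Nat.le_add_left 1 k)
  filter_upwards [prod_mem_prod (Ici_mem_atTop N) (hO.mem_nhds hzO)] with ⟨n, y⟩ ⟨hn, hy⟩
  have hclose := hN n hn y hy
  rw [kIter_dirac, Nat.cast_add_one] at hclose
  rw [Real.dist_0_eq_abs, abs_of_nonneg (dFM_nonneg _ _)]
  exact hclose.trans_lt hk

lemma tendsto_dFM_pow_pow_of_mem_iInter_Ok [IsMarkovKernel κ] [IsFiniteMeasure μst]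
    (hz : z ∈ ⋂ k ∈ {k : ℕ | 1 ≤ k}, Ok κ μst k) :
    Tendsto (fun p : ℕ × S => dFM ((κ ^ p.1) p.2) ((κ ^ p.1) z)) (atTop ×ˢ 𝓝 z) (𝓝 0) := by
  have hx := tendsto_dFM_pow_of_mem_iInter_Ok hz
  have hfst : Tendsto (fun p : ℕ × S => (p.1, z)) (atTop ×ˢ 𝓝 z) (atTop ×ˢ 𝓝 z) :=
    tendsto_fst.prodMk tendsto_const_nhds
  have hsum := hx.add (hx.comp hfst)
  simp only [Function.comp_def, add_zero] at hsum
  refine squeeze_zero (fun _ => dFM_nonneg _ _) (fun p => ?_) hsum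
  rw [dFM_comm ((κ ^ p.1) z)]
  exact dFM_triangle _ μst _

end JointConvergence

lemma tendsto_iSup_abs_integral_sub_of_tendsto_iSup_dFM {S ι α : Type*} [PseudoMetricSpace S]
    [MeasurableSpace S] {l : Filter α} {μ ν : ι → α → Measure S}
    [∀ i x, IsProbabilityMeasure (μ i x)] [∀ i x, IsProbabilityMeasure (ν i x)]
    (h : Tendsto (fun x => ⨆ i, dFM (μ i x) (ν i x)) l (𝓝 0)) {f : S → ℝ}
    (hlip : LipschitzWith 1 f) (hf : ∀ x, f x ∈ Set.Icc (0 : ℝ) 1) :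
    Tendsto (fun x => ⨆ i, |∫ y, f y ∂μ i x - ∫ y, f y ∂ν i x|) l (𝓝 0) := by
  have hbdd (x : α) : BddAbove (Set.range fun i => dFM (μ i x) (ν i x)) :=
    ⟨1, Set.forall_mem_range.2 fun i => by simpa using dFM_le_max (μ i x) (ν i x)⟩
  exact squeeze_zero (fun x => Real.iSup_nonneg fun _ => abs_nonneg _)
    (fun x => ciSup_mono (hbdd x) fun i => abs_integral_sub_integral_le_dFM hlip hf _ _) h

theorem ePropFM_on_inter_Ok_general {S : Type*} [MetricSpace S]
    [TopologicalSpace.SeparableSpace S] [MeasurableSpace S] [OpensMeasurableSpace S]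
    (κ : Kernel S S) [IsMarkovKernel κ] (hFeller : IsFeller κ)
    (μst : Measure S) [IsFiniteMeasure μst] :
    ∀ z ∈ ⋂ k ∈ {k : ℕ | 1 ≤ k}, Ok κ μst k,
      Tendsto (fun x => ⨆ n : ℕ,
          dFM (kIter κ n (Measure.dirac x)) (kIter κ n (Measure.dirac z))) (𝓝 z) (𝓝 0) ∧
      ∀ f : S → ℝ, LipschitzWith 1 f → (∀ x, f x ∈ Set.Icc (0 : ℝ) 1) →
        Tendsto (fun x => ⨆ n : ℕ, |kDual κ n f x - kDual κ n f z|) (𝓝 z) (𝓝 0) := by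
  intro z hz
  simp only [kDual, kIter_dirac]
  have hdFM : Tendsto (fun x => ⨆ n : ℕ, dFM ((κ ^ n) x) ((κ ^ n) z)) (𝓝 z) (𝓝 0) := by
    refine tendsto_iSup_zero_of_tendsto_cofinite_prod (fun _ _ => dFM_nonneg _ _) (fun n => ?_) ?_
    · exact (hFeller.pow n).tendsto_dFM z
    · rw [Nat.cofinite_eq_atTop]
      exact tendsto_dFM_pow_pow_of_mem_iInter_Ok hz
  exact ⟨hdFM, fun f hlip hf => tendsto_iSup_abs_integral_sub_of_tendsto_iSup_dFM hdFM hlip hf⟩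

/-- For an asymptotically stable Markov–Feller operator on a Polish metric space, at every
point `z` of `⋂_{k≥1} O_k` one has `sup_{n} d_FM(Pⁿδₓ, Pⁿδ_z) → 0` as `x → z`; in particular
the operator has the e-property in `L_FM(S)` at every point of this intersection. -/
theorem ePropFM_on_inter_Ok
    {S : Type*} [MetricSpace S] [CompleteSpace S] [SecondCountableTopology S]
    [MeasurableSpace S] [BorelSpace S]
    (κ : ProbabilityTheory.Kernel S S) [IsMarkovKernel κ]
    (hFeller : IsFeller κ) (μst : Measure S) (hstab : IsAsympStable κ μst) :
    ∀ z ∈ ⋂ k ∈ {k : ℕ | 1 ≤ k}, Ok κ μst k,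
      Tendsto (fun x => ⨆ n : ℕ,
          dFM (kIter κ n (Measure.dirac x)) (kIter κ n (Measure.dirac z))) (𝓝 z) (𝓝 0) ∧
      ∀ f : S → ℝ, LipschitzWith 1 f → (∀ x, f x ∈ Set.Icc (0 : ℝ) 1) →
        Tendsto (fun x => ⨆ n : ℕ, |kDual κ n f x - kDual κ n f z|) (𝓝 z) (𝓝 0) := by
  have : IsProbabilityMeasure μst := hstab.1
  exact ePropFM_on_inter_Ok_general κ hFeller μst
end
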